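/- arXiv:1703.00744 — 2 statements merged into one kernel-verified Lean document; each statement's English description precedes it below -/
import Mathlib

section
/- Let f : ℝⁿ → ℝ be a convex continuous function and let K ⊆ ℝⁿ be a convex body. Then for every t > 0, E_t[f] − min_{x∈K} f(x) ≤ n·t. -/
open MeasureTheory Real

/-- The Boltzmann expectation `E_t[f] = (∫_K f e^{-f/t}) / (∫_K e^{-f/t})`. -/
noncomputable def boltzmannExp (n : ℕ) (f : (Fin n → ℝ) → ℝ) (K : Set (Fin n → ℝ)) (t : ℝ) : ℝ :=
  (∫ x in K, f x * Real.exp (-f x / t)) / (∫ x in K, Real.exp (-f x / t))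

/-!
Fix `x₀ ∈ K`, write `d` for the dimension and shrink `K` towards `x₀` by a factor `s < 1`. The
image lies in `K`, so `s ^ d * ∫_K e^{-f(x₀ + s(x - x₀))} ≤ ∫_K e^{-f}`, while convexity and
`1 + u ≤ e^u` bound the integrand on the left below by `(1 + (1 - s)(f x - f x₀)) e^{-f x}`.
Comparing the terms of first order in `1 - s` as `s → 1` gives
`∫_K (f - f x₀) e^{-f} ≤ d ∫_K e^{-f}` for every `x₀ ∈ K`, minimizer or not. Replacing `f` by
`f / t` introduces the temperature, and the infimum over `x₀` gives the bound.
-/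

open AffineMap Filter Module Set Topology

theorem le_nat_mul_of_forall_pow_mul_add_le {n : ℕ} {A Z : ℝ} (hZ : 0 ≤ Z)
    (h : ∀ s ∈ Ioo (0 : ℝ) 1, s ^ n * (Z + (1 - s) * A) ≤ Z) : A ≤ n * Z := by
  have pow_mul_le : ∀ s ∈ Ioo (0 : ℝ) 1, s ^ n * A ≤ n * Z := by
    intro s hs
    have bernoulli : 1 + n * (s - 1) ≤ s ^ n := by
      simpa using one_add_mul_le_pow (a := s - 1) (by linarith [hs.1]) n
    refine le_of_mul_le_mul_left ?_ (sub_pos.2 hs.2)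
    calc (1 - s) * (s ^ n * A) ≤ (1 - s ^ n) * Z := by linarith [h s hs]
      _ ≤ (n * (1 - s)) * Z := by gcongr; linarith
      _ = (1 - s) * (n * Z) := by ring
  have tendsto_pow_mul : Tendsto (fun s : ℝ ↦ s ^ n * A) (𝓝[<] 1) (𝓝 A) := by
    have hcont : Continuous fun s : ℝ ↦ s ^ n * A := by fun_prop
    simpa using (hcont.tendsto 1).mono_left nhdsWithin_le_nhds
  exact le_of_tendsto tendsto_pow_mul <|
    mem_of_superset (Ioo_mem_nhdsLT zero_lt_one) pow_mul_le

theorem exp_neg_add_le_exp_neg_homothety {E : Type*} [AddCommGroup E] [Module ℝ E]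
    {K : Set E} {f : E → ℝ} (hf : ConvexOn ℝ K f) {x₀ x : E} (hx₀ : x₀ ∈ K) (hx : x ∈ K)
    {s : ℝ} (hs : s ∈ Icc (0 : ℝ) 1) :
    exp (-f x) + (1 - s) * ((f x - f x₀) * exp (-f x)) ≤ exp (-f (homothety x₀ s x)) := by
  have hconv : f (homothety x₀ s x) ≤ (1 - s) * f x₀ + s * f x := by
    rw [homothety_eq_lineMap, lineMap_apply_module]
    exact hf.2 hx₀ hx (sub_nonneg.2 hs.2) hs.1 (sub_add_cancel 1 s)
  calc exp (-f x) + (1 - s) * ((f x - f x₀) * exp (-f x))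
      = exp (-f x) * ((1 - s) * (f x - f x₀) + 1) := by ring
    _ ≤ exp (-f x) * exp ((1 - s) * (f x - f x₀)) := by gcongr; exact add_one_le_exp _
    _ = exp (-((1 - s) * f x₀ + s * f x)) := by rw [← exp_add]; ring_nf
    _ ≤ exp (-f (homothety x₀ s x)) := by gcongr

section Haar

variable {E : Type*} [NormedAddCommGroup E] [NormedSpace ℝ E] [FiniteDimensional ℝ E]
  [MeasurableSpace E] [BorelSpace E] {μ : Measure E} [μ.IsAddHaarMeasure]
  {F : Type*} [NormedAddCommGroup F] {K : Set E} {f : E → ℝ} {x₀ : E}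

theorem map_homothety_addHaar (μ : Measure E) [μ.IsAddHaarMeasure] (x₀ : E) {s : ℝ} (hs : s ≠ 0) :
    μ.map (homothety x₀ s) = ENNReal.ofReal |(s ^ finrank ℝ E)⁻¹| • μ := by
  have hcomp : ⇑(homothety x₀ s) = (· + (x₀ - s • x₀)) ∘ (s • ·) := by
    ext x
    simp only [homothety_apply, vsub_eq_sub, vadd_eq_add, smul_sub, Function.comp_apply]
    abel
  rw [hcomp, ← Measure.map_map (measurable_add_const _) (measurable_const_smul s),
    Measure.map_addHaar_smul μ hs, Measure.map_smul, map_add_right_eq_self]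

theorem measurableEmbedding_homothety (x₀ : E) {s : ℝ} (hs : s ≠ 0) :
    MeasurableEmbedding (homothety x₀ s) :=
  (homothety_continuous x₀ s).measurableEmbedding (homothety_injective x₀ hs)

theorem integrableOn_comp_homothety {s : ℝ} (hs : s ≠ 0) {g : E → F} (hg : IntegrableOn g K μ) :
    IntegrableOn (fun x ↦ g (homothety x₀ s x)) (homothety x₀ s ⁻¹' K) μ := by
  refine (measurableEmbedding_homothety x₀ hs).integrableOn_map_iff.1 ?_
  rw [map_homothety_addHaar μ x₀ hs, IntegrableOn, Measure.restrict_smul]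
  exact hg.smul_measure ENNReal.ofReal_ne_top

theorem setIntegral_comp_homothety [NormedSpace ℝ F] {s : ℝ} (hs : s ≠ 0) (g : E → F) :
    ∫ x in homothety x₀ s ⁻¹' K, g (homothety x₀ s x) ∂μ =
      |(s ^ finrank ℝ E)⁻¹| • ∫ x in K, g x ∂μ := by
  rw [← (measurableEmbedding_homothety x₀ hs).setIntegral_map, map_homothety_addHaar μ x₀ hs,
    Measure.restrict_smul, integral_smul_measure, ENNReal.toReal_ofReal (abs_nonneg _)]

theorem pow_finrank_mul_setIntegral_comp_homothety_le {s : ℝ} (hs : 0 < s)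
    (hK : MapsTo (homothety x₀ s) K K) {g : E → ℝ} (hg₀ : ∀ x, 0 ≤ g x) (hg : IntegrableOn g K μ) :
    s ^ finrank ℝ E * ∫ x in K, g (homothety x₀ s x) ∂μ ≤ ∫ x in K, g x ∂μ := by
  have hmono : ∫ x in K, g (homothety x₀ s x) ∂μ ≤
      ∫ x in homothety x₀ s ⁻¹' K, g (homothety x₀ s x) ∂μ :=
    setIntegral_mono_set (integrableOn_comp_homothety hs.ne' hg)
      (ae_of_all _ fun x ↦ hg₀ _) hK.subset_preimage.eventuallyLE
  rwa [setIntegral_comp_homothety hs.ne', abs_of_pos (by positivity), smul_eq_mul,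
    le_inv_mul_iff₀ (by positivity)] at hmono

theorem pow_finrank_mul_setIntegral_exp_neg_add_le (hf : ConvexOn ℝ K f) (hx₀ : x₀ ∈ K)
    (hexp : IntegrableOn (fun x ↦ exp (-f x)) K μ)
    (hmul : IntegrableOn (fun x ↦ (f x - f x₀) * exp (-f x)) K μ)
    {s : ℝ} (hs : s ∈ Ioc (0 : ℝ) 1) :
    s ^ finrank ℝ E *
        (∫ x in K, exp (-f x) ∂μ + (1 - s) * ∫ x in K, (f x - f x₀) * exp (-f x) ∂μ) ≤
      ∫ x in K, exp (-f x) ∂μ := by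
  have hK : MapsTo (homothety x₀ s) K K := fun x hx ↦ by
    rw [homothety_eq_lineMap]
    exact hf.1.lineMap_mem hx₀ hx (Ioc_subset_Icc_self hs)
  have hmono : ∫ x in K, exp (-f x) ∂μ + (1 - s) * ∫ x in K, (f x - f x₀) * exp (-f x) ∂μ ≤
      ∫ x in K, exp (-f (homothety x₀ s x)) ∂μ := by
    rw [← integral_const_mul, ← integral_add hexp (hmul.const_mul _)]
    refine integral_mono_ae (hexp.add (hmul.const_mul _))
      ((integrableOn_comp_homothety hs.1.ne' hexp).mono_set hK) ?_
    filter_upwards [ae_restrict_mem₀ (hf.1.nullMeasurableSet μ)] with x hx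
    exact exp_neg_add_le_exp_neg_homothety hf hx₀ hx (Ioc_subset_Icc_self hs)
  calc _ ≤ s ^ finrank ℝ E * ∫ x in K, exp (-f (homothety x₀ s x)) ∂μ :=
        mul_le_mul_of_nonneg_left hmono (pow_nonneg hs.1.le _)
    _ ≤ ∫ x in K, exp (-f x) ∂μ :=
        pow_finrank_mul_setIntegral_comp_homothety_le hs.1 hK (fun _ ↦ (exp_pos _).le) hexp

theorem setIntegral_mul_exp_neg_le (hf : ConvexOn ℝ K f) (hx₀ : x₀ ∈ K)
    (hexp : IntegrableOn (fun x ↦ exp (-f x)) K μ)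
    (hmul : IntegrableOn (fun x ↦ f x * exp (-f x)) K μ) :
    ∫ x in K, f x * exp (-f x) ∂μ ≤ (f x₀ + finrank ℝ E) * ∫ x in K, exp (-f x) ∂μ := by
  have hsub : IntegrableOn (fun x ↦ (f x - f x₀) * exp (-f x)) K μ := by
    simp only [sub_mul]
    exact hmul.sub (hexp.const_mul (f x₀))
  have hexcess : ∫ x in K, (f x - f x₀) * exp (-f x) ∂μ ≤
      finrank ℝ E * ∫ x in K, exp (-f x) ∂μ :=
    le_nat_mul_of_forall_pow_mul_add_le (integral_nonneg fun _ ↦ (exp_pos _).le) fun _ hs ↦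
      pow_finrank_mul_setIntegral_exp_neg_add_le hf hx₀ hexp hsub (Ioo_subset_Ioc_self hs)
  simp only [sub_mul] at hexcess
  rw [integral_sub hmul (hexp.const_mul _), integral_const_mul] at hexcess
  linarith

theorem setIntegral_mul_exp_neg_div_le (hf : ConvexOn ℝ K f) (hx₀ : x₀ ∈ K) {t : ℝ} (ht : 0 < t)
    (hexp : IntegrableOn (fun x ↦ exp (-f x / t)) K μ)
    (hmul : IntegrableOn (fun x ↦ f x * exp (-f x / t)) K μ) :
    ∫ x in K, f x * exp (-f x / t) ∂μ ≤
      (f x₀ + finrank ℝ E * t) * ∫ x in K, exp (-f x / t) ∂μ := by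
  have hconv : ConvexOn ℝ K fun x ↦ f x / t := by
    simpa only [div_eq_inv_mul, smul_eq_mul] using hf.smul (inv_nonneg.2 ht.le)
  have hmul_div : IntegrableOn (fun x ↦ f x / t * exp (-f x / t)) K μ := by
    simp only [div_mul_eq_mul_div]
    exact hmul.div_const t
  simp only [neg_div] at hexp hmul_div ⊢
  have hscaled := setIntegral_mul_exp_neg_le hconv hx₀ hexp hmul_div
  simp only [div_mul_eq_mul_div, integral_div] at hscaled
  rwa [div_le_iff₀ ht, mul_right_comm, add_mul, div_mul_cancel₀ _ ht.ne'] at hscaled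

theorem stmt2_general (hf : ConvexOn ℝ K f) (hK : μ K ≠ 0) {t : ℝ} (ht : 0 < t)
    (hexp : IntegrableOn (fun x ↦ exp (-f x / t)) K μ)
    (hmul : IntegrableOn (fun x ↦ f x * exp (-f x / t)) K μ) :
    (∫ x in K, f x * exp (-f x / t) ∂μ) / (∫ x in K, exp (-f x / t) ∂μ) - sInf (f '' K) ≤
      finrank ℝ E * t := by
  have : NeZero (μ.restrict K) := ⟨Measure.restrict_eq_zero.not.2 hK⟩
  have hKne : (f '' K).Nonempty := (nonempty_of_measure_ne_zero hK).image f
  rw [sub_le_comm]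
  refine le_csInf hKne (forall_mem_image.2 fun x₀ hx₀ ↦ ?_)
  rw [sub_le_iff_le_add, div_le_iff₀ (integral_exp_pos hexp)]
  exact setIntegral_mul_exp_neg_div_le hf hx₀ ht hexp hmul

end Haar

theorem stmt2 (n : ℕ) (f : (Fin n → ℝ) → ℝ)
    (hfconv : ConvexOn ℝ Set.univ f) (hfcont : Continuous f)
    (K : Set (Fin n → ℝ)) (hKcomp : IsCompact K) (hKconv : Convex ℝ K)
    (hKint : (interior K).Nonempty)
    (t : ℝ) (ht : 0 < t) :
    boltzmannExp n f K t - sInf (f '' K) ≤ n * t := by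
  have integrableOn_of_continuous {g : (Fin n → ℝ) → ℝ} (hg : Continuous g) : IntegrableOn g K :=
    hg.continuousOn.integrableOn_compact hKcomp
  simpa [boltzmannExp] using stmt2_general (hfconv.subset (subset_univ K) hKconv)
    (Measure.measure_pos_of_nonempty_interior volume hKint).ne' ht
    (integrableOn_of_continuous (by fun_prop)) (integrableOn_of_continuous (by fun_prop))
end

section
/- Let f : ℝⁿ → ℝ be a polynomial (not necessarily convex) and let K ⊆ ℝⁿ be a convex body. Then there is a constant c > 0 depending only on f and K such that for every integer r ≥ 1, f̲^(2r)_K − min_{x∈K} f(x) ≤ c/r. -/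
open MeasureTheory Real

/-- Lasserre's measure-based upper bound `f̲^(r)_K`: the infimum of `∫_K h f`
over sum-of-squares polynomial densities `h` of degree at most `2r` with `∫_K h = 1`. -/
noncomputable def lasserreBound (n : ℕ) (f : (Fin n → ℝ) → ℝ) (K : Set (Fin n → ℝ)) (r : ℕ) : ℝ :=
  sInf { y : ℝ | ∃ (m : ℕ) (p : Fin m → MvPolynomial (Fin n) ℝ),
    (∀ i, (p i).totalDegree ≤ r) ∧
    (∫ x in K, MvPolynomial.eval x (∑ i, p i ^ 2)) = 1 ∧
    y = ∫ x in K, MvPolynomial.eval x (∑ i, p i ^ 2) * f x }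

/-!
The normalized Dirichlet kernel is a polynomial of degree `k` in `s² = sin² θ` which is bounded by
`1` and by `1 / ((2 * k + 1) * s)` on `0 < s ≤ 1` and, by Jordan's inequality, at least `2 / π` for
`s ≤ 1 / (2 * k + 1)`. Taking for `s` a multiple of the Euclidean distance to a minimizer `x₀` and
raising to the power `n + 1` gives a polynomial of degree `O(k)` whose square `w` decays like
`(1 + N * ‖x - x₀‖) ^ (-(2 * n + 2))`, where `N = 2 * k + 1`. Since `f - f x₀` is at most
`L * ‖x - x₀‖`, rescaling by `N` gives `∫_K w * (f - f x₀) = O(N⁻¹ * N ^ (-n))`. On the other hand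
`w` is bounded below on the copy of `K` shrunk towards `x₀` by the factor `N`, which stays inside
`K`, so `∫_K w` is at least a constant times `N ^ (-n)`. The quotient is `O(1 / N)`.
-/

section Needle

open Polynomial

/-- The Dirichlet kernel `1 + 2 ∑_{1 ≤ j ≤ k} cos (2 j θ)`, written as a polynomial of degree `k` in
the variable `y = sin² θ` (so that `cos (2 θ) = 1 - 2 y`) and normalized to take the value `1` at
`y = 0`. It is the needle polynomial whose powers serve as concentrating densities. -/
noncomputable def needle (k : ℕ) : ℝ[X] :=
  C (2 * k + 1 : ℝ)⁻¹ * (1 + 2 * ∑ j ∈ Finset.range k, (Chebyshev.T ℝ (j + 1 : ℕ)).comp (1 - 2 * X))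

lemma natDegree_needle_le (k : ℕ) : (needle k).natDegree ≤ k := by
  have hlin : (1 - 2 * X : ℝ[X]).natDegree ≤ 1 := by compute_degree
  have hT : ∀ j ∈ Finset.range k,
      ((Chebyshev.T ℝ (j + 1 : ℕ)).comp (1 - 2 * X)).natDegree ≤ k := fun j hj ↦ by
    refine natDegree_comp_le.trans ((Nat.mul_le_mul_left _ hlin).trans ?_)
    rw [Chebyshev.natDegree_T, mul_one, Int.natAbs_natCast]
    exact Finset.mem_range.1 hj
  refine (natDegree_C_mul_le _ _).trans (natDegree_add_le_of_degree_le (by simp) ?_)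
  rw [← C_ofNat]
  exact (natDegree_C_mul_le _ _).trans (natDegree_sum_le_of_forall_le _ _ hT)

lemma eval_needle (k : ℕ) (y : ℝ) : (needle k).eval y = (2 * k + 1 : ℝ)⁻¹ *
    (1 + 2 * ∑ j ∈ Finset.range k, (Chebyshev.T ℝ (j + 1 : ℕ)).eval (1 - 2 * y)) := by
  simp [needle, eval_finsetSum]

lemma eval_needle_zero (k : ℕ) : (needle k).eval 0 = 1 := by
  rw [eval_needle]
  simp only [mul_zero, sub_zero, Chebyshev.T_eval_one, Finset.sum_const, Finset.card_range,
    nsmul_eq_mul, mul_one]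
  field_simp
  ring

lemma abs_eval_needle_le_one (k : ℕ) {y : ℝ} (hy₀ : 0 ≤ y) (hy₁ : y ≤ 1) :
    |(needle k).eval y| ≤ 1 := by
  have hT : |∑ j ∈ Finset.range k, (Chebyshev.T ℝ (j + 1 : ℕ)).eval (1 - 2 * y)| ≤ k := by
    refine (Finset.abs_sum_le_sum_abs _ _).trans
      ((Finset.sum_le_card_nsmul _ _ 1 fun j _ ↦ ?_).trans (by simp))
    exact Chebyshev.abs_eval_T_real_le_one _ (abs_le.2 ⟨by linarith, by linarith⟩)
  rw [abs_le] at hT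
  rw [eval_needle, abs_mul, abs_of_pos (by positivity), inv_mul_le_one₀ (by positivity), abs_le]
  constructor <;> linarith

lemma sin_mul_one_add_two_mul_sum_cos (k : ℕ) (θ : ℝ) :
    sin θ * (1 + 2 * ∑ j ∈ Finset.range k, cos ((j + 1 : ℕ) * (2 * θ))) =
      sin ((2 * k + 1) * θ) := by
  induction k with
  | zero => simp
  | succ k ih =>
    have hstep : sin ((2 * (k + 1 : ℕ) + 1) * θ) - sin ((2 * k + 1) * θ) =
        2 * sin θ * cos ((k + 1 : ℕ) * (2 * θ)) := by
      rw [sin_sub_sin]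
      push_cast
      ring_nf
    rw [Finset.sum_range_succ]
    linear_combination ih - hstep

lemma eval_needle_sin_sq_mul (k : ℕ) (θ : ℝ) :
    (needle k).eval (sin θ ^ 2) * ((2 * k + 1) * sin θ) = sin ((2 * k + 1) * θ) := by
  have hcos : 1 - 2 * sin θ ^ 2 = cos (2 * θ) := by rw [cos_two_mul, cos_sq']; ring
  simp only [eval_needle, hcos, Chebyshev.T_real_cos, Int.cast_natCast]
  rw [← sin_mul_one_add_two_mul_sum_cos, mul_mul_mul_comm, inv_mul_cancel₀ (by positivity), one_mul,
    mul_comm]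

lemma abs_eval_needle_sq_mul_le_one (k : ℕ) {s : ℝ} (hs₀ : 0 ≤ s) (hs₁ : s ≤ 1) :
    |(needle k).eval (s ^ 2)| * ((2 * k + 1) * s) ≤ 1 := by
  have h := eval_needle_sin_sq_mul k (arcsin s)
  rw [sin_arcsin (by linarith) hs₁] at h
  rw [← abs_of_nonneg (show 0 ≤ (2 * k + 1) * s by positivity), ← abs_mul, h]
  exact abs_sin_le_one _

lemma two_div_pi_le_eval_needle_sq (k : ℕ) {s : ℝ} (hs₀ : 0 ≤ s) (hs : (2 * k + 1) * s ≤ 1) :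
    2 / π ≤ (needle k).eval (s ^ 2) := by
  obtain rfl | hs_pos := hs₀.eq_or_lt
  · rw [zero_pow two_ne_zero, eval_needle_zero, div_le_one pi_pos]
    exact two_le_pi
  have hs₁ : s ≤ 1 := (le_mul_of_one_le_left hs₀ (by simp)).trans hs
  set θ := arcsin s
  have hsin : sin θ = s := sin_arcsin (by linarith) hs₁
  have hθ₀ : 0 ≤ θ := arcsin_nonneg.2 hs₀
  have hsθ : s ≤ θ := hsin ▸ sin_le hθ₀
  have hθs : 2 / π * θ ≤ s := hsin ▸ mul_le_sin hθ₀ (arcsin_le_pi_div_two s)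
  have hθ : (2 * k + 1) * θ ≤ π / 2 := by
    have : 2 / π * ((2 * k + 1) * θ) ≤ 1 := by
      rw [mul_left_comm]
      exact (mul_le_mul_of_nonneg_left hθs (by positivity)).trans hs
    rwa [← le_div_iff₀' (by positivity), one_div_div] at this
  refine le_of_mul_le_mul_right ?_ (show 0 < (2 * k + 1) * s by positivity)
  calc 2 / π * ((2 * k + 1) * s) ≤ 2 / π * ((2 * k + 1) * θ) := by gcongr
    _ ≤ sin ((2 * k + 1) * θ) := mul_le_sin (by positivity) hθ
    _ = (needle k).eval (s ^ 2) * ((2 * k + 1) * s) := by rw [← eval_needle_sin_sq_mul, hsin]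

end Needle

section NeedleDensity

open MvPolynomial

lemma totalDegree_aeval_le {σ R : Type*} [CommSemiring R] (g : MvPolynomial σ R)
    (P : Polynomial R) : (Polynomial.aeval g P).totalDegree ≤ P.natDegree * g.totalDegree := by
  rw [Polynomial.aeval_eq_sum_range]
  refine totalDegree_finsetSum_le fun i hi ↦ (totalDegree_smul_le _ _).trans ?_
  exact (totalDegree_pow _ _).trans
    (Nat.mul_le_mul_right _ (Nat.lt_succ_iff.1 (Finset.mem_range.1 hi)))

variable {ι : Type*} [Fintype ι]

/-- The squared Euclidean distance to `x₀` in units of `D`, as a polynomial. -/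
noncomputable def scaledDistSq (x₀ : ι → ℝ) (D : ℝ) : MvPolynomial ι ℝ :=
  C (D ^ 2)⁻¹ * ∑ i, (X i - C (x₀ i)) ^ 2

lemma totalDegree_scaledDistSq_le (x₀ : ι → ℝ) (D : ℝ) : (scaledDistSq x₀ D).totalDegree ≤ 2 := by
  refine (totalDegree_mul _ _).trans ?_
  rw [totalDegree_C, zero_add]
  refine totalDegree_finsetSum_le fun i _ ↦ (totalDegree_pow _ _).trans ?_
  have := totalDegree_sub_C_le (X i : MvPolynomial ι ℝ) (x₀ i)
  rw [totalDegree_X] at this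
  omega

lemma eval_scaledDistSq (x₀ : ι → ℝ) (D : ℝ) (x : ι → ℝ) :
    eval x (scaledDistSq x₀ D) = (‖WithLp.toLp 2 (x - x₀)‖ / D) ^ 2 := by
  rw [div_pow, EuclideanSpace.norm_sq_eq]
  simp [scaledDistSq, inv_mul_eq_div]

/-- The `m`-th power of the needle polynomial `needle k` evaluated at the squared Euclidean distance
to `x₀`. Its square is the (unnormalized) density which concentrates at `x₀` on the scale
`D / (2 * k + 1)`. -/
noncomputable def radialNeedle (m k : ℕ) (x₀ : ι → ℝ) (D : ℝ) : MvPolynomial ι ℝ :=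
  Polynomial.aeval (scaledDistSq x₀ D) (needle k) ^ m

lemma totalDegree_radialNeedle_le (m k : ℕ) (x₀ : ι → ℝ) (D : ℝ) :
    (radialNeedle m k x₀ D).totalDegree ≤ m * (k * 2) :=
  (totalDegree_pow _ _).trans <| Nat.mul_le_mul_left _ <| (totalDegree_aeval_le _ _).trans <|
    Nat.mul_le_mul (natDegree_needle_le k) (totalDegree_scaledDistSq_le x₀ D)

lemma eval_radialNeedle (m k : ℕ) (x₀ : ι → ℝ) (D : ℝ) (x : ι → ℝ) :
    eval x (radialNeedle m k x₀ D) =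
      (needle k).eval ((‖WithLp.toLp 2 (x - x₀)‖ / D) ^ 2) ^ m := by
  rw [radialNeedle, map_pow, ← eval_scaledDistSq, ← coe_aeval_eq_eval, RingHom.coe_coe,
    ← Polynomial.aeval_algHom_apply, Polynomial.coe_aeval_eq_eval]

lemma pow_succ_mul_le_mul_one_add_rpow_neg {a z D : ℝ} (m : ℕ) (ha₀ : 0 ≤ a) (ha₁ : a ≤ 1)
    (hz : 0 ≤ z) (haz : a * z ≤ D) :
    a ^ (m + 1) * z ≤ (1 + D) ^ (m + 1) * (1 + z) ^ (-m : ℝ) := by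
  rw [rpow_neg (by positivity), rpow_natCast, ← div_eq_mul_inv, le_div_iff₀ (by positivity)]
  calc a ^ (m + 1) * z * (1 + z) ^ m ≤ a ^ (m + 1) * (1 + z) * (1 + z) ^ m := by
        gcongr
        exact le_add_of_nonneg_left zero_le_one
    _ = (a * (1 + z)) ^ (m + 1) := by rw [mul_pow]; ring
    _ ≤ (1 + D) ^ (m + 1) := by
        gcongr
        linarith

lemma norm_le_norm_toLp (p : ENNReal) [Fact (1 ≤ p)] (v : ι → ℝ) : ‖v‖ ≤ ‖WithLp.toLp p v‖ :=
  (pi_norm_le_iff_of_nonneg (norm_nonneg _)).2 fun i ↦ PiLp.norm_apply_le (WithLp.toLp p v) i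

lemma eval_radialNeedle_sq_mul_le (m k : ℕ) {x₀ x : ι → ℝ} {D : ℝ} (hD : 0 < D)
    (hx : ‖WithLp.toLp 2 (x - x₀)‖ ≤ D) :
    eval x (radialNeedle (m + 1) k x₀ D) ^ 2 * ((2 * k + 1) * ‖x - x₀‖) ≤
      (1 + D) ^ (2 * m + 2) * (1 + (2 * k + 1) * ‖x - x₀‖) ^ (-(2 * m + 1 : ℕ) : ℝ) := by
  set s := ‖WithLp.toLp 2 (x - x₀)‖ / D with hs
  have hs₀ : 0 ≤ s := by positivity
  have hs₁ : s ≤ 1 := (div_le_one hD).2 hx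
  have hdecay : |(needle k).eval (s ^ 2)| * ((2 * k + 1) * ‖x - x₀‖) ≤ D :=
    calc |(needle k).eval (s ^ 2)| * ((2 * k + 1) * ‖x - x₀‖)
        ≤ |(needle k).eval (s ^ 2)| * ((2 * k + 1) * ‖WithLp.toLp 2 (x - x₀)‖) := by
          gcongr
          exact norm_le_norm_toLp 2 _
      _ = |(needle k).eval (s ^ 2)| * ((2 * k + 1) * s) * D := by
          rw [hs]
          field_simp
      _ ≤ D := mul_le_of_le_one_left hD.le (abs_eval_needle_sq_mul_le_one k hs₀ hs₁)
  have hsq : eval x (radialNeedle (m + 1) k x₀ D) ^ 2 =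
      |(needle k).eval (s ^ 2)| ^ (2 * m + 1 + 1) := by
    rw [eval_radialNeedle, ← sq_abs, abs_pow, ← pow_mul, add_one_mul, mul_comm]
  rw [hsq]
  exact pow_succ_mul_le_mul_one_add_rpow_neg _ (abs_nonneg _)
    (abs_eval_needle_le_one k (sq_nonneg s) (pow_le_one₀ hs₀ hs₁)) (by positivity) hdecay

lemma le_eval_radialNeedle_sq (m k : ℕ) {x₀ x : ι → ℝ} {D : ℝ} (hD : 0 < D)
    (hx : (2 * k + 1) * ‖WithLp.toLp 2 (x - x₀)‖ ≤ D) :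
    ((2 / π) ^ m) ^ 2 ≤ eval x (radialNeedle m k x₀ D) ^ 2 := by
  rw [eval_radialNeedle]
  gcongr
  refine two_div_pi_le_eval_needle_sq k (by positivity) ?_
  rwa [← mul_div_assoc, div_le_one hD]

end NeedleDensity

section Scaling

variable {E : Type*} [NormedAddCommGroup E] [NormedSpace ℝ E] [FiniteDimensional ℝ E]
  [MeasurableSpace E] [BorelSpace E] {μ : Measure E} [μ.IsAddHaarMeasure] {K : Set E} {x₀ : E}

lemma integral_comp_smul_sub {F : Type*} [NormedAddCommGroup F] [NormedSpace ℝ F] (g : E → F)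
    (x₀ : E) {R : ℝ} (hR : 0 ≤ R) :
    ∫ x, g (R • (x - x₀)) ∂μ = (R ^ Module.finrank ℝ E)⁻¹ • ∫ x, g x ∂μ := by
  rw [integral_sub_right_eq_self (fun x ↦ g (R • x)) x₀,
    Measure.integral_comp_smul_of_nonneg _ _ R (hR := hR)]

lemma setIntegral_mul_le_of_decay (hK : MeasurableSet K) {w φ : E → ℝ} {A L R s : ℝ}
    (hint : IntegrableOn (fun x ↦ w x * φ x) K μ) (hA : 0 ≤ A) (hL : 0 ≤ L) (hR : 0 < R)
    (hs : Module.finrank ℝ E < s) (hw : ∀ x ∈ K, 0 ≤ w x) (hφ : ∀ x ∈ K, φ x ≤ L * ‖x - x₀‖)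
    (hdecay : ∀ x ∈ K, w x * (R * ‖x - x₀‖) ≤ A * (1 + R * ‖x - x₀‖) ^ (-s)) :
    ∫ x in K, w x * φ x ∂μ ≤
      L * A / R * ((R ^ Module.finrank ℝ E)⁻¹ * ∫ x, (1 + ‖x‖) ^ (-s) ∂μ) := by
  set G : E → ℝ := fun x ↦ (1 + ‖x‖) ^ (-s)
  have hG : Integrable (fun x ↦ L * A / R * G (R • (x - x₀))) μ :=
    (((integrable_one_add_norm hs).comp_smul hR.ne').comp_sub_right x₀).const_mul _
  have hpointwise : ∀ x ∈ K, w x * φ x ≤ L * A / R * G (R • (x - x₀)) := fun x hx ↦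
    calc w x * φ x ≤ w x * (L * ‖x - x₀‖) := mul_le_mul_of_nonneg_left (hφ x hx) (hw x hx)
      _ = L / R * (w x * (R * ‖x - x₀‖)) := by field_simp
      _ ≤ L / R * (A * (1 + R * ‖x - x₀‖) ^ (-s)) :=
          mul_le_mul_of_nonneg_left (hdecay x hx) (by positivity)
      _ = L * A / R * G (R • (x - x₀)) := by
          simp only [G, norm_smul, norm_of_nonneg hR.le]
          ring
  calc ∫ x in K, w x * φ x ∂μ ≤ ∫ x in K, L * A / R * G (R • (x - x₀)) ∂μ :=
        setIntegral_mono_on hint hG.integrableOn hK hpointwise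
    _ ≤ ∫ x, L * A / R * G (R • (x - x₀)) ∂μ :=
        setIntegral_le_integral hG (.of_forall fun x ↦ by simp only [Pi.zero_apply, G]; positivity)
    _ = L * A / R * ((R ^ Module.finrank ℝ E)⁻¹ * ∫ x, G x ∂μ) := by
        rw [integral_const_mul, integral_comp_smul_sub G x₀ hR.le, smul_eq_mul]

lemma mul_measureReal_le_setIntegral_of_starConvex (hK : IsCompact K) (hstar : StarConvex ℝ x₀ K)
    {w : E → ℝ} (hint : IntegrableOn w K μ) (hw : ∀ x ∈ K, 0 ≤ w x) {b R : ℝ} (hR : 1 ≤ R)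
    (hb : ∀ x ∈ K, b ≤ w (AffineMap.homothety x₀ R⁻¹ x)) :
    b * ((R ^ Module.finrank ℝ E)⁻¹ * μ.real K) ≤ ∫ x in K, w x ∂μ := by
  have : 0 < R := zero_lt_one.trans_le hR
  set S := AffineMap.homothety x₀ R⁻¹ '' K with hS
  have hSK : S ⊆ K := by
    rintro _ ⟨x, hx, rfl⟩
    rw [AffineMap.homothety_apply, vsub_eq_sub, vadd_eq_add, add_comm]
    exact hstar.add_smul_sub_mem hx (by positivity) (inv_le_one_of_one_le₀ hR)
  have hSc : IsCompact S := hK.image (AffineMap.homothety_continuous x₀ R⁻¹)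
  have hSvol : μ.real S = (R ^ Module.finrank ℝ E)⁻¹ * μ.real K := by
    rw [measureReal_def, hS, Measure.addHaar_image_homothety, ENNReal.toReal_mul,
      ENNReal.toReal_ofReal (abs_nonneg _), abs_of_pos (by positivity), inv_pow, measureReal_def]
  rw [← hSvol]
  calc b * μ.real S ≤ ∫ x in S, w x ∂μ :=
        setIntegral_ge_of_const_le_real hSc.measurableSet hSc.measure_lt_top.ne
          (Set.forall_mem_image.2 hb) (hint.mono_set hSK)
    _ ≤ ∫ x in K, w x ∂μ :=
        setIntegral_mono_set hint (ae_restrict_of_forall_mem hK.measurableSet hw) hSK.eventuallyLE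

end Scaling

section LasserreBound

open MvPolynomial

lemma le_setIntegral_mul_of_setIntegral_eq_one {α : Type*} [MeasurableSpace α] {μ : Measure α}
    {K : Set α} (hK : MeasurableSet K) {h f : α → ℝ} {a : ℝ} (hh : IntegrableOn h K μ)
    (hhf : IntegrableOn (fun x ↦ h x * f x) K μ) (hh_nonneg : ∀ x ∈ K, 0 ≤ h x)
    (hh_one : ∫ x in K, h x ∂μ = 1) (hf : ∀ x ∈ K, a ≤ f x) : a ≤ ∫ x in K, h x * f x ∂μ :=
  calc a = ∫ x in K, h x * a ∂μ := by rw [integral_mul_const, hh_one, one_mul]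
    _ ≤ ∫ x in K, h x * f x ∂μ := setIntegral_mono_on (hh.mul_const a) hhf hK fun x hx ↦
        mul_le_mul_of_nonneg_left (hf x hx) (hh_nonneg x hx)

variable {n : ℕ} {K : Set (Fin n → ℝ)} {f : (Fin n → ℝ) → ℝ}

lemma lasserreBound_le_div (hK : IsCompact K) (hf : IntegrableOn f K) {a : ℝ}
    (ha : ∀ x ∈ K, a ≤ f x) {r : ℕ} {q : MvPolynomial (Fin n) ℝ} (hq : q.totalDegree ≤ r)
    (hpos : 0 < ∫ x in K, eval x q ^ 2) :
    lasserreBound n f K r ≤ (∫ x in K, eval x q ^ 2 * f x) / ∫ x in K, eval x q ^ 2 := by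
  set A := ∫ x in K, eval x q ^ 2 with hA
  have hcont (P : MvPolynomial (Fin n) ℝ) : ContinuousOn (fun x ↦ eval x P) K :=
    (continuous_eval P).continuousOn
  have hnormalize (x : Fin n → ℝ) :
      eval x (∑ _i : Fin 1, (C (√A)⁻¹ * q) ^ 2) = A⁻¹ * eval x q ^ 2 := by
    simp [mul_pow, sq_sqrt hpos.le]
  refine csInf_le ⟨a, ?_⟩ ⟨1, fun _ ↦ C (√A)⁻¹ * q, fun _ ↦ ?_, ?_, ?_⟩
  · rintro _ ⟨m, p, -, hone, rfl⟩
    refine le_setIntegral_mul_of_setIntegral_eq_one hK.measurableSet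
      ((hcont _).integrableOn_compact hK) (hf.continuousOn_mul (hcont _) hK) (fun x _ ↦ ?_) hone ha
    simp only [map_sum, map_pow]
    positivity
  · exact (totalDegree_mul _ _).trans (by simpa using hq)
  · simp_rw [hnormalize]
    rw [integral_const_mul, ← hA, inv_mul_cancel₀ hpos.ne']
  · simp_rw [hnormalize, mul_assoc]
    rw [integral_const_mul, inv_mul_eq_div]

lemma lasserreBound_sub_le_div (hK : IsCompact K) (hf : IntegrableOn f K) {a : ℝ}
    (ha : ∀ x ∈ K, a ≤ f x) {r : ℕ} {q : MvPolynomial (Fin n) ℝ} (hq : q.totalDegree ≤ r)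
    (hpos : 0 < ∫ x in K, eval x q ^ 2) :
    lasserreBound n f K r - a ≤
      (∫ x in K, eval x q ^ 2 * (f x - a)) / ∫ x in K, eval x q ^ 2 := by
  have hsq : ContinuousOn (fun x ↦ eval x q ^ 2) K := ((continuous_eval q).pow 2).continuousOn
  simp_rw [mul_sub]
  rw [integral_sub (hf.continuousOn_mul hsq hK) ((hsq.integrableOn_compact hK).mul_const a),
    integral_mul_const, sub_div, mul_div_cancel_left₀ _ hpos.ne']
  gcongr
  exact lasserreBound_le_div hK hf ha hq hpos

/-- The constant in the estimate of `lasserreBound` by needle densities, for a function of growth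
rate at most `L` around its minimizer and a domain `K` of Euclidean radius at most `D`. -/
noncomputable def needleConst (K : Set (Fin n → ℝ)) (D L : ℝ) : ℝ :=
  L * (1 + D) ^ (2 * n + 2) * (∫ x : Fin n → ℝ, (1 + ‖x‖) ^ (-(2 * n + 1 : ℕ) : ℝ)) /
    (((2 / π) ^ (n + 1)) ^ 2 * volume.real K)

lemma needleConst_nonneg (K : Set (Fin n → ℝ)) {D L : ℝ} (hD : 0 ≤ D) (hL : 0 ≤ L) :
    0 ≤ needleConst K D L := by
  have : 0 ≤ ∫ x : Fin n → ℝ, (1 + ‖x‖) ^ (-(2 * n + 1 : ℕ) : ℝ) :=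
    integral_nonneg fun x ↦ by positivity
  unfold needleConst
  positivity

lemma lasserreBound_sub_le_needleConst_div (hK : IsCompact K) (hvol : volume K ≠ 0)
    {x₀ : Fin n → ℝ} (hstar : StarConvex ℝ x₀ K) (hf : IntegrableOn f K) (hmin : IsMinOn f K x₀)
    {D L : ℝ} (hD : 0 < D) (hKD : ∀ x ∈ K, ‖WithLp.toLp 2 (x - x₀)‖ ≤ D) (hL : 0 ≤ L)
    (hfL : ∀ x ∈ K, f x - f x₀ ≤ L * ‖x - x₀‖) {k r : ℕ} (hkr : (n + 1) * (k * 2) ≤ r) :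
    lasserreBound n f K r - f x₀ ≤ needleConst K D L / (2 * k + 1) := by
  set q := radialNeedle (n + 1) k x₀ D
  set N : ℝ := 2 * k + 1 with hN
  have hN₁ : 1 ≤ N := by simp [hN]
  have hN₀ : 0 < N := by positivity
  have hvol' : 0 < volume.real K := ENNReal.toReal_pos hvol hK.measure_lt_top.ne
  have hq : ContinuousOn (fun x ↦ eval x q ^ 2) K := ((continuous_eval q).pow 2).continuousOn
  have hnum := setIntegral_mul_le_of_decay (μ := volume) hK.measurableSet
    ((hf.sub (integrableOn_const hK.measure_lt_top.ne)).continuousOn_mul hq hK)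
    (show 0 ≤ (1 + D) ^ (2 * n + 2) by positivity) hL hN₀ (s := (2 * n + 1 : ℕ))
    (by rw [Module.finrank_fin_fun]; norm_cast; omega) (fun x _ ↦ sq_nonneg _) hfL
    (fun x hx ↦ eval_radialNeedle_sq_mul_le n k hD (hKD x hx))
  have hden := mul_measureReal_le_setIntegral_of_starConvex (μ := volume)
    (b := ((2 / π) ^ (n + 1)) ^ 2) hK hstar (hq.integrableOn_compact hK) (fun x _ ↦ sq_nonneg _) hN₁
    fun x hx ↦ le_eval_radialNeedle_sq (n + 1) k hD <| by
      rw [AffineMap.homothety_apply, vsub_eq_sub, vadd_eq_add, add_sub_cancel_right,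
        WithLp.toLp_smul, norm_smul, norm_of_nonneg (by positivity), mul_inv_cancel_left₀ hN₀.ne']
      exact hKD x hx
  rw [Module.finrank_fin_fun] at hnum hden
  have hden_pos : 0 < ((2 / π) ^ (n + 1)) ^ 2 * ((N ^ n)⁻¹ * volume.real K) := by positivity
  calc lasserreBound n f K r - f x₀
      ≤ (∫ x in K, eval x q ^ 2 * (f x - f x₀)) / ∫ x in K, eval x q ^ 2 :=
        lasserreBound_sub_le_div hK hf hmin ((totalDegree_radialNeedle_le _ _ _ _).trans hkr)
          (hden_pos.trans_le hden)
    _ ≤ _ / _ := div_le_div₀ (by positivity) hnum hden_pos hden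
    _ = needleConst K D L / N := by
        unfold needleConst
        field_simp

lemma exists_forall_norm_toLp_sub_le {ι : Type*} [Fintype ι] {K : Set (ι → ℝ)} (hK : IsCompact K) :
    ∃ D : ℝ, 0 < D ∧ ∀ x ∈ K, ∀ y ∈ K, ‖WithLp.toLp 2 (x - y)‖ ≤ D := by
  obtain ⟨D, hD⟩ := ((hK.prod hK).image (f := fun z ↦ ‖WithLp.toLp 2 (z.1 - z.2)‖)
    (by fun_prop)).bddAbove
  exact ⟨max D 1, by positivity, fun x hx y hy ↦ le_max_of_le_left (hD ⟨(x, y), ⟨hx, hy⟩, rfl⟩)⟩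

lemma exists_lipschitzOnWith_eval {ι : Type*} [Fintype ι] (p : MvPolynomial ι ℝ) {K : Set (ι → ℝ)}
    (hK : IsCompact K) (hconv : Convex ℝ K) : ∃ L, LipschitzOnWith L (fun x ↦ eval x p) K := by
  have hdiff : ContDiff ℝ 1 fun x ↦ eval x p :=
    contDiff_iff_contDiffAt.2 fun x ↦
      (AnalyticOnNhd.eval_mvPolynomial p x (Set.mem_univ x)).contDiffAt
  exact hdiff.contDiffOn.exists_lipschitzOnWith one_ne_zero hconv hK

end LasserreBound

theorem stmt6_general {n : ℕ} {K : Set (Fin n → ℝ)} (hK : IsCompact K) (hvol : volume K ≠ 0)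
    (L : NNReal) :
    ∃ c : ℝ, 0 < c ∧ ∀ (f : (Fin n → ℝ) → ℝ) (x₀ : Fin n → ℝ), LipschitzOnWith L f K → x₀ ∈ K →
      IsMinOn f K x₀ → StarConvex ℝ x₀ K → ∀ r : ℕ, 1 ≤ r →
        lasserreBound n f K (2 * r) - sInf (f '' K) ≤ c / r := by
  obtain ⟨D, hD, hKD⟩ := exists_forall_norm_toLp_sub_le hK
  have hC := needleConst_nonneg K hD.le L.coe_nonneg
  refine ⟨needleConst K D L * (n + 1) + 1, by positivity, fun f x₀ hf hx₀ hmin hstar r hr ↦ ?_⟩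
  have hinf : sInf (f '' K) = f x₀ :=
    IsLeast.csInf_eq ⟨Set.mem_image_of_mem f hx₀, Set.forall_mem_image.2 hmin⟩
  have hgrowth : ∀ x ∈ K, f x - f x₀ ≤ L * ‖x - x₀‖ := fun x hx ↦
    (le_abs_self _).trans (by simpa [dist_eq_norm] using hf.dist_le_mul x hx x₀ hx₀)
  set k := r / (n + 1)
  have hkr : (n + 1) * k ≤ r := Nat.mul_div_le r (n + 1)
  have hrk : (r : ℝ) ≤ (n + 1) * (2 * k + 1) := by
    have : r < (n + 1) * (k + 1) := Nat.lt_mul_div_succ r n.succ_pos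
    exact_mod_cast this.le.trans (Nat.mul_le_mul_left _ (by omega))
  rw [hinf]
  calc lasserreBound n f K (2 * r) - f x₀ ≤ needleConst K D L / (2 * k + 1) :=
        lasserreBound_sub_le_needleConst_div hK hvol hstar (hf.continuousOn.integrableOn_compact hK)
          hmin hD (fun x hx ↦ hKD x hx x₀ hx₀) L.coe_nonneg hgrowth (by linarith)
    _ ≤ needleConst K D L * (n + 1) / r := by
        rw [div_le_div_iff₀ (by positivity) (by positivity), mul_assoc]
        gcongr
    _ ≤ (needleConst K D L * (n + 1) + 1) / r := by
        gcongr
        exact le_add_of_nonneg_right zero_le_one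

theorem stmt6 (n : ℕ) (p : MvPolynomial (Fin n) ℝ)
    (f : (Fin n → ℝ) → ℝ) (hf : f = fun x => MvPolynomial.eval x p)
    (K : Set (Fin n → ℝ)) (hKcomp : IsCompact K) (hKconv : Convex ℝ K)
    (hKint : (interior K).Nonempty) :
    ∃ c : ℝ, 0 < c ∧ ∀ r : ℕ, 1 ≤ r →
      lasserreBound n f K (2 * r) - sInf (f '' K) ≤ c / r := by
  obtain ⟨L, hL⟩ := exists_lipschitzOnWith_eval p hKcomp hKconv
  obtain ⟨x₀, hx₀, hmin⟩ := hKcomp.exists_isMinOn (hKint.mono interior_subset) hL.continuousOn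
  obtain ⟨c, hc, hbound⟩ :=
    stmt6_general hKcomp (Measure.measure_pos_of_nonempty_interior volume hKint).ne' L
  exact ⟨c, hc, hf ▸ hbound _ x₀ hL hx₀ hmin (hKconv.starConvex hx₀)⟩
end
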